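/- arXiv:2204.05741 — 5 statements merged into one kernel-verified Lean document; each statement's English description precedes it below -/
import Mathlib

section
/- The restriction of the tortoise coordinate r_* to the interior region (r_-, r_+) is strictly decreasing and is a bijection from (r_-, r_+) onto ℝ; moreover r_*(r) tends to +∞ as r tends to r_- from the right, and r_*(r) tends to −∞ as r tends to r_+ from the left. -/
/-!
On `(r₋, r₊)` the derivative of `r_*` is `(r² + a²) / ((r - r₊)(r - r₋))`
(`tortoise_deriv_identity`). Since `r₋ r₊ = a² + Q² > 0`, the interval does not contain `0`, so the
numerator is positive while the denominator is negative; hence `r_*` is strictly decreasing.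
At either endpoint exactly one logarithm diverges, with a coefficient of known sign because
`r₋` and `r₊` are nonzero. Surjectivity follows from the intermediate value theorem.
-/

/-- The partial fraction decomposition behind `dr_*/dr = (r² + a²) / Δ`. -/
lemma tortoise_deriv_identity (a rp rm r : ℝ) (h : rp - rm ≠ 0) (hp : r - rp ≠ 0)
    (hm : r - rm ≠ 0) :
    1 + (rp ^ 2 + a ^ 2) / (rp - rm) * (r - rp)⁻¹ - (rm ^ 2 + a ^ 2) / (rp - rm) * (r - rm)⁻¹
      = (r ^ 2 + a ^ 2) / ((r - rp) * (r - rm)) := by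
  field_simp
  ring

lemma tendsto_log_sub_atBot (c : ℝ) (s : Set ℝ) (hs : c ∉ s) :
    Filter.Tendsto (fun r => Real.log (r - c)) (nhdsWithin c s) Filter.atBot := by
  refine Real.tendsto_log_nhdsNE_zero.comp ?_
  refine tendsto_nhdsWithin_iff.2 ⟨?_, ?_⟩
  · have : ContinuousAt (fun r : ℝ => r - c) c := by fun_prop
    have h := this.tendsto
    simp only [sub_self] at h
    exact h.mono_left nhdsWithin_le_nhds
  · filter_upwards [self_mem_nhdsWithin] with r hr
    exact sub_ne_zero.2 fun h => hs (h ▸ hr)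

/-- The restriction of the tortoise coordinate to the interior region `(r₋, r₊)` is strictly
decreasing, a bijection onto `ℝ`, tends to `+∞` as `r → r₋⁺` and to `-∞` as `r → r₊⁻`. -/
theorem tortoise_interior
    (M a Q : ℝ) (h1 : 0 < a ^ 2 + Q ^ 2) (h2 : a ^ 2 + Q ^ 2 < M ^ 2)
    (rp rm : ℝ)
    (hrp : rp = M + Real.sqrt (M ^ 2 - a ^ 2 - Q ^ 2))
    (hrm : rm = M - Real.sqrt (M ^ 2 - a ^ 2 - Q ^ 2))
    (rstar : ℝ → ℝ)
    (hrstar : ∀ r : ℝ, rstar r =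
      r + (rp ^ 2 + a ^ 2) / (rp - rm) * Real.log |r - rp|
        - (rm ^ 2 + a ^ 2) / (rp - rm) * Real.log |r - rm|) :
    StrictAntiOn rstar (Set.Ioo rm rp) ∧
    Set.BijOn rstar (Set.Ioo rm rp) Set.univ ∧
    Filter.Tendsto rstar (nhdsWithin rm (Set.Ioo rm rp)) Filter.atTop ∧
    Filter.Tendsto rstar (nhdsWithin rp (Set.Ioo rm rp)) Filter.atBot := by
  have hs : 0 < Real.sqrt (M ^ 2 - a ^ 2 - Q ^ 2) := Real.sqrt_pos.2 (by linarith)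
  have hsq := Real.sq_sqrt (show 0 ≤ M ^ 2 - a ^ 2 - Q ^ 2 by linarith)
  have hlt : rm < rp := by linarith
  have hd : 0 < rp - rm := by linarith
  have hprod : 0 < rm * rp := by
    have : rm * rp = a ^ 2 + Q ^ 2 := by rw [hrp, hrm]; linarith
    linarith
  have hrm0 : rm ≠ 0 := left_ne_zero_of_mul hprod.ne'
  have hrp0 : rp ≠ 0 := right_ne_zero_of_mul hprod.ne'
  have hA : 0 < (rp ^ 2 + a ^ 2) / (rp - rm) := by positivity
  have hB : 0 < (rm ^ 2 + a ^ 2) / (rp - rm) := by positivity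
  have hf : rstar = fun r => r + (rp ^ 2 + a ^ 2) / (rp - rm) * Real.log (r - rp)
        - (rm ^ 2 + a ^ 2) / (rp - rm) * Real.log (r - rm) := by
    funext r
    rw [hrstar, Real.log_abs, Real.log_abs]
  have hderiv : ∀ r ∈ Set.Ioo rm rp,
      HasDerivAt rstar ((r ^ 2 + a ^ 2) / ((r - rp) * (r - rm))) r := by
    intro r hr
    have hp : r - rp ≠ 0 := (sub_neg.2 hr.2).ne
    have hm : r - rm ≠ 0 := (sub_pos.2 hr.1).ne'
    rw [← tortoise_deriv_identity a rp rm r hd.ne' hp hm, hf]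
    have e1 := (((hasDerivAt_id r).sub_const rp).log hp).const_mul ((rp ^ 2 + a ^ 2) / (rp - rm))
    have e2 := (((hasDerivAt_id r).sub_const rm).log hm).const_mul ((rm ^ 2 + a ^ 2) / (rp - rm))
    simp only [one_div, id_eq] at e1 e2
    exact ((hasDerivAt_id' r).add e1).sub e2
  have hcont : ContinuousOn rstar (Set.Ioo rm rp) := fun r hr =>
    (hderiv r hr).continuousAt.continuousWithinAt
  have hanti : StrictAntiOn rstar (Set.Ioo rm rp) := by
    refine strictAntiOn_of_deriv_neg (convex_Ioo rm rp) hcont fun r hr => ?_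
    rw [interior_Ioo] at hr
    rw [(hderiv r hr).deriv]
    -- `0 ∉ (rm, rp)`, because `rm` and `rp` have the same sign
    have hr0 : r ≠ 0 := by
      rintro rfl
      exact (mul_neg_of_neg_of_pos hr.1 hr.2).not_gt hprod
    exact div_neg_of_pos_of_neg (by positivity)
      (mul_neg_of_neg_of_pos (sub_neg.2 hr.2) (sub_pos.2 hr.1))
  have hleft : Filter.Tendsto rstar (nhdsWithin rm (Set.Ioo rm rp)) Filter.atTop := by
    have hlog := (tendsto_log_sub_atBot rm (Set.Ioo rm rp) (by simp)).const_mul_atBot hB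
    have hreg : ContinuousAt
        (fun r => r + (rp ^ 2 + a ^ 2) / (rp - rm) * Real.log (r - rp)) rm := by
      have : rm - rp ≠ 0 := by linarith
      fun_prop (disch := assumption)
    rw [hf]
    simpa only [sub_eq_add_neg, Function.comp_def] using
      (hreg.tendsto.mono_left nhdsWithin_le_nhds).add_atTop
        (Filter.tendsto_neg_atBot_atTop.comp hlog)
  have hright : Filter.Tendsto rstar (nhdsWithin rp (Set.Ioo rm rp)) Filter.atBot := by
    have hlog := (tendsto_log_sub_atBot rp (Set.Ioo rm rp) (by simp)).const_mul_atBot hA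
    have hreg : ContinuousAt
        (fun r => r - (rm ^ 2 + a ^ 2) / (rp - rm) * Real.log (r - rm)) rp := by
      have : rp - rm ≠ 0 := hd.ne'
      fun_prop (disch := assumption)
    rw [hf]
    refine ((hreg.tendsto.mono_left nhdsWithin_le_nhds).add_atBot hlog).congr fun r => ?_
    ring
  refine ⟨hanti, ⟨Set.mapsTo_univ _ _, hanti.injOn, ?_⟩, hleft, hright⟩
  refine hcont.surjOn_of_tendsto' (Set.nonempty_Ioo.2 hlt) ?_ ?_
  · rw [nhdsWithin_Ioo_eq_nhdsGT hlt] at hleft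
    exact (tendsto_comp_coe_Ioo_atBot hlt).2 hleft
  · rw [nhdsWithin_Ioo_eq_nhdsLT hlt] at hright
    exact (tendsto_comp_coe_Ioo_atTop hlt).2 hright
end

section
/- Let u₀ > 0, C > 0, and let f : [u₀, ∞) → ℂ² be differentiable, nowhere vanishing, and satisfy ‖f'(u)‖ ≤ (C/u²)·‖f(u)‖ for all u ≥ u₀. Then there exists N > 0 with 1/N ≤ ‖f(u)‖ ≤ N for all u ≥ u₀; the limit f_∞ = lim_{u→∞} f(u) exists and is nonzero; and there exists b > 0 such that ‖f(u) − f_∞‖ ≤ b/u for all u ≥ u₀. -/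
/-!
The substitution `s = 1 / u` turns the singular weight `C / u ^ 2` into a constant: the function
`h s = f (1 / s)` satisfies `‖h' s‖ ≤ C * ‖h s‖` on `(0, 1 / u₀]`. Grönwall's inequality, run
forwards and backwards in `s`, bounds `‖h‖` above and below by `‖f u₀‖ * exp (± C / u₀)`
(`norm_le_exp_mul_norm`). Hence `h'` is bounded by some `L`, so `h` is `L`-Lipschitz, i.e.
`‖f v - f u‖ ≤ L * |1 / v - 1 / u|`. This makes `f` Cauchy at infinity; letting `v → ∞` gives the
rate `L / u`, and the lower bound on `‖f‖` passes to the limit.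
-/

/-- Two-sided Grönwall inequality for `‖h'‖ ≤ K * ‖h‖`: the norm at either of the endpoints
controls the norm at the other one. -/
lemma norm_le_exp_mul_norm {E : Type*} [NormedAddCommGroup E] [NormedSpace ℝ E]
    {h h' : ℝ → E} {K a b : ℝ} (hab : a ≤ b)
    (hd : ∀ s ∈ Set.Icc a b, HasDerivAt h (h' s) s)
    (hb : ∀ s ∈ Set.Icc a b, ‖h' s‖ ≤ K * ‖h s‖) :
    ‖h b‖ ≤ ‖h a‖ * Real.exp (K * (b - a)) ∧ ‖h a‖ ≤ ‖h b‖ * Real.exp (K * (b - a)) := by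
  constructor
  · have := norm_le_gronwallBound_of_norm_deriv_right_le (f := h) (f' := h') (δ := ‖h a‖)
      (K := K) (ε := 0) (a := a) (b := b)
      (fun s hs => (hd s hs).continuousAt.continuousWithinAt)
      (fun s hs => (hd s ⟨hs.1, hs.2.le⟩).hasDerivWithinAt) le_rfl
      (fun s hs => by simpa using hb s ⟨hs.1, hs.2.le⟩) b ⟨hab, le_rfl⟩
    rwa [gronwallBound_ε0] at this
  · -- the same inequality for the reflected function `s ↦ h (-s)` on `[-b, -a]`
    have hd' : ∀ s ∈ Set.Icc (-b) (-a), HasDerivAt (fun s => h (-s)) (-h' (-s)) s := by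
      intro s hs
      have h1 := hd (-s) ⟨by linarith [hs.2], by linarith [hs.1]⟩
      simpa [Function.comp_def] using h1.scomp s (hasDerivAt_neg s)
    have := norm_le_gronwallBound_of_norm_deriv_right_le (f := fun s => h (-s))
      (f' := fun s => -h' (-s)) (δ := ‖h b‖)
      (K := K) (ε := 0) (a := -b) (b := -a)
      (fun s hs => (hd' s hs).continuousAt.continuousWithinAt)
      (fun s hs => (hd' s ⟨hs.1, hs.2.le⟩).hasDerivWithinAt) (by simp)
      (fun s hs => by
        simpa using hb (-s) ⟨by linarith [hs.2], by linarith [hs.1]⟩) (-a)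
      ⟨by linarith, le_rfl⟩
    rw [gronwallBound_ε0] at this
    simpa [show -a + b = b - a by ring] using this

/-- Grönwall-type convergence lemma with polynomially decaying derivative bound. -/
theorem gronwall_polynomial_decay
    (u₀ C : ℝ) (hu₀ : 0 < u₀) (hC : 0 < C)
    (f f' : ℝ → EuclideanSpace ℂ (Fin 2))
    (hderiv : ∀ u, u₀ ≤ u → HasDerivAt f (f' u) u)
    (hne : ∀ u, u₀ ≤ u → f u ≠ 0)
    (hbound : ∀ u, u₀ ≤ u → ‖f' u‖ ≤ C / u ^ 2 * ‖f u‖) :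
    (∃ N : ℝ, 0 < N ∧ ∀ u, u₀ ≤ u → 1 / N ≤ ‖f u‖ ∧ ‖f u‖ ≤ N) ∧
    ∃ flim : EuclideanSpace ℂ (Fin 2), flim ≠ 0 ∧
      Filter.Tendsto f Filter.atTop (nhds flim) ∧
      ∃ b : ℝ, 0 < b ∧ ∀ u, u₀ ≤ u → ‖f u - flim‖ ≤ b / u := by
  have hle : ∀ s ∈ Set.Ioc 0 u₀⁻¹, u₀ ≤ s⁻¹ := fun s hs => (le_inv_comm₀ hu₀ hs.1).2 hs.2
  have hmem : ∀ u, u₀ ≤ u → u⁻¹ ∈ Set.Ioc 0 u₀⁻¹ := fun u hu =>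
    ⟨inv_pos.2 (hu₀.trans_le hu), inv_anti₀ hu₀ hu⟩
  have hd : ∀ s ∈ Set.Ioc 0 u₀⁻¹,
      HasDerivAt (fun s => f s⁻¹) ((-(s ^ 2)⁻¹) • f' s⁻¹) s := fun s hs =>
    (hderiv s⁻¹ (hle s hs)).scomp s (hasDerivAt_inv hs.1.ne')
  have hb : ∀ s ∈ Set.Ioc 0 u₀⁻¹, ‖(-(s ^ 2)⁻¹) • f' s⁻¹‖ ≤ C * ‖f s⁻¹‖ := by
    intro s hs
    have hs0 : 0 < s := hs.1
    rw [norm_smul, norm_neg, Real.norm_of_nonneg (by positivity)]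
    calc (s ^ 2)⁻¹ * ‖f' s⁻¹‖ ≤ (s ^ 2)⁻¹ * (C / s⁻¹ ^ 2 * ‖f s⁻¹‖) := by
          gcongr
          exact hbound _ (hle s hs)
      _ = C * ‖f s⁻¹‖ := by field_simp
  have hA : 0 < ‖f u₀‖ := norm_pos_iff.2 (hne u₀ le_rfl)
  set A := ‖f u₀‖ with hAdef
  set M := Real.exp (C * u₀⁻¹) with hM
  have hMpos : 0 < M := Real.exp_pos _
  have key : ∀ u, u₀ ≤ u → ‖f u‖ ≤ A * M ∧ A ≤ ‖f u‖ * M := by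
    intro u hu
    have hm := hmem u hu
    have hsub : ∀ s ∈ Set.Icc u⁻¹ u₀⁻¹, s ∈ Set.Ioc 0 u₀⁻¹ := fun s hs =>
      ⟨hm.1.trans_le hs.1, hs.2⟩
    have h2 := norm_le_exp_mul_norm hm.2 (fun s hs => hd s (hsub s hs))
      (fun s hs => hb s (hsub s hs))
    simp only [inv_inv] at h2
    have hexp : Real.exp (C * (u₀⁻¹ - u⁻¹)) ≤ M := by
      apply Real.exp_le_exp.2
      have := hm.1
      gcongr
      linarith
    exact ⟨h2.2.trans (by gcongr), h2.1.trans (by gcongr)⟩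
  have hlow : ∀ u, u₀ ≤ u → A / M ≤ ‖f u‖ := fun u hu =>
    (div_le_iff₀ hMpos).2 (key u hu).2
  set L := C * (A * M) with hL
  have hLpos : 0 < L := by positivity
  have hlip : ∀ u, u₀ ≤ u → ∀ v, u ≤ v → ‖f v - f u‖ ≤ L / u := by
    intro u hu v huv
    have hv := hu.trans huv
    have h1 := (convex_Ioc 0 u₀⁻¹).norm_image_sub_le_of_norm_hasDerivWithin_le (C := L)
      (fun s hs => (hd s hs).hasDerivWithinAt)
      (fun s hs => (hb s hs).trans (by
        have := (key _ (hle s hs)).1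
        rw [hL]
        gcongr)) (hmem u hu) (hmem v hv)
    simp only [inv_inv] at h1
    refine h1.trans ?_
    rw [div_eq_mul_inv]
    gcongr
    have h3 : v⁻¹ ≤ u⁻¹ := inv_anti₀ (hu₀.trans_le hu) huv
    rw [Real.norm_eq_abs, abs_le]
    constructor <;> linarith [(hmem v hv).1, (hmem u hu).1]
  have hcau : CauchySeq f := by
    refine Metric.cauchySeq_iff'.2 fun ε hε => ?_
    refine ⟨u₀ + L / ε, fun v hv => ?_⟩
    have hLε : 0 < L / ε := by positivity
    rw [dist_eq_norm]
    refine (hlip _ (by linarith) v hv).trans_lt ?_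
    rw [div_lt_iff₀ (by positivity)]
    have : ε * (u₀ + L / ε) = ε * u₀ + L := by field_simp
    rw [this]
    linarith [mul_pos hε hu₀]
  obtain ⟨l, hl⟩ := cauchySeq_tendsto_of_complete hcau
  refine ⟨⟨A * M + M / A, by positivity, fun u hu => ⟨?_, ?_⟩⟩, l, ?_, hl, L, hLpos, ?_⟩
  · refine le_trans ?_ (hlow u hu)
    rw [← one_div_div M A]
    apply one_div_le_one_div_of_le (by positivity)
    linarith [mul_pos hA hMpos]
  · linarith [(key u hu).1, div_pos hMpos hA]
  · have : A / M ≤ ‖l‖ := ge_of_tendsto hl.norm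
      ((Filter.eventually_ge_atTop u₀).mono hlow)
    exact norm_pos_iff.1 ((div_pos hA hMpos).trans_le this)
  · intro u hu
    rw [norm_sub_rev]
    exact le_of_tendsto (hl.sub_const (f u)).norm
      ((Filter.eventually_ge_atTop u).mono (hlip u hu))
end

section
/- Let u₀ ∈ ℝ, q > 0, α > 0, and let h : [u₀, ∞) → ℂ² be differentiable, nowhere vanishing, and satisfy ‖h'(u)‖ ≤ q·exp(−α u)·‖h(u)‖ for all u ≥ u₀. Then there exists N > 0 with 1/N ≤ ‖h(u)‖ ≤ N for all u ≥ u₀; the limit h_∞ = lim_{u→∞} h(u) exists and is nonzero; and there exists b > 0 such that ‖h(u) − h_∞‖ ≤ b·exp(−α u) for all u ≥ u₀. -/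
/-!
Since `h` never vanishes, `log ‖h‖²` is differentiable, and the hypothesis together with
Cauchy–Schwarz says that its derivative is at most `2 q exp (-α u)` in absolute value. That bound
is integrable at infinity, so `log ‖h‖²` stays bounded, which gives the two-sided bound on `‖h‖`.
Hence `‖h' u‖ ≤ q N exp (-α u)`, and integrating once more shows that `h` is Cauchy at infinity
with the claimed exponential rate; the limit is nonzero because `‖h‖ ≥ 1 / N`.

Both integrations are instances of `norm_sub_le_of_deriv_exp_decay`.
-/

lemma norm_sub_le_of_deriv_exp_decay {E : Type*} [NormedAddCommGroup E] [NormedSpace ℝ E]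
    {u₀ C α : ℝ} (hC : 0 ≤ C) (hα : 0 < α) {f f' : ℝ → E}
    (hf : ∀ u, u₀ ≤ u → HasDerivAt f (f' u) u)
    (hb : ∀ u, u₀ ≤ u → ‖f' u‖ ≤ C * Real.exp (-α * u))
    {u v : ℝ} (hu : u₀ ≤ u) (huv : u ≤ v) :
    ‖f v - f u‖ ≤ C / α * Real.exp (-α * u) := by
  -- The comparison function is the integral of `C * exp (-α * x)` from `u`.
  have hB : ∀ x, HasDerivAt
      (fun x => C / α * (Real.exp (-α * u) - Real.exp (-α * x))) (C * Real.exp (-α * x)) x := by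
    intro x
    have h1 : HasDerivAt (fun x : ℝ => -α * x) (-α) x := by
      simpa using (hasDerivAt_id x).const_mul (-α)
    have h2 : C / α * -(Real.exp (-α * x) * -α) = C * Real.exp (-α * x) := by
      field_simp
    exact h2 ▸ (h1.exp.const_sub (Real.exp (-α * u))).const_mul (C / α)
  have key := image_norm_le_of_norm_deriv_right_le_deriv_boundary (a := u) (b := v)
    (f := fun x => f x - f u) (f' := f')
    (fun x hx => ((hf x (hu.trans hx.1)).sub_const _).continuousAt.continuousWithinAt)
    (fun x hx => ((hf x (hu.trans hx.1)).sub_const _).hasDerivWithinAt)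
    (by simp) hB (fun x hx => hb x (hu.trans hx.1)) (Set.right_mem_Icc.2 huv)
  refine key.trans (mul_le_mul_of_nonneg_left ?_ (by positivity))
  linarith [Real.exp_pos (-α * v)]

lemma exists_abs_log_norm_le {E : Type*} [NormedAddCommGroup E] [InnerProductSpace ℝ E]
    {u₀ q α : ℝ} (hq : 0 < q) (hα : 0 < α) {h h' : ℝ → E}
    (hderiv : ∀ u, u₀ ≤ u → HasDerivAt h (h' u) u)
    (hne : ∀ u, u₀ ≤ u → h u ≠ 0)
    (hbound : ∀ u, u₀ ≤ u → ‖h' u‖ ≤ q * Real.exp (-α * u) * ‖h u‖) :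
    ∃ M : ℝ, ∀ u, u₀ ≤ u → |Real.log ‖h u‖| ≤ M := by
  have hd : ∀ u, u₀ ≤ u → HasDerivAt (fun u => Real.log (‖h u‖ ^ 2))
      (2 * inner ℝ (h u) (h' u) / ‖h u‖ ^ 2) u := fun u hu =>
    (hderiv u hu).norm_sq.log (pow_ne_zero 2 (norm_ne_zero_iff.2 (hne u hu)))
  have hb : ∀ u, u₀ ≤ u → ‖2 * inner ℝ (h u) (h' u) / ‖h u‖ ^ 2‖
      ≤ 2 * q * Real.exp (-α * u) := by
    intro u hu
    have hp : 0 < ‖h u‖ := norm_pos_iff.2 (hne u hu)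
    rw [norm_div, norm_mul, Real.norm_eq_abs, Real.norm_eq_abs, Real.norm_eq_abs, abs_two,
      abs_of_pos (pow_pos hp 2), div_le_iff₀ (pow_pos hp 2)]
    have h1 := abs_real_inner_le_norm (h u) (h' u)
    have h2 := mul_le_mul_of_nonneg_left (hbound u hu) hp.le
    nlinarith
  refine ⟨|Real.log ‖h u₀‖| + q / α * Real.exp (-α * u₀), fun u hu => ?_⟩
  have h1 := norm_sub_le_of_deriv_exp_decay (by positivity) hα hd hb le_rfl hu
  simp only [Real.log_pow, Real.norm_eq_abs] at h1
  push_cast at h1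
  rw [← mul_sub, abs_mul, abs_two, mul_div_assoc, mul_assoc] at h1
  have h2 := abs_sub_abs_le_abs_sub (Real.log ‖h u‖) (Real.log ‖h u₀‖)
  linarith

/-- Grönwall-type convergence lemma with exponentially decaying derivative bound. -/
theorem gronwall_exponential_decay
    (u₀ q α : ℝ) (hq : 0 < q) (hα : 0 < α)
    (h h' : ℝ → EuclideanSpace ℂ (Fin 2))
    (hderiv : ∀ u, u₀ ≤ u → HasDerivAt h (h' u) u)
    (hne : ∀ u, u₀ ≤ u → h u ≠ 0)
    (hbound : ∀ u, u₀ ≤ u → ‖h' u‖ ≤ q * Real.exp (-α * u) * ‖h u‖) :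
    (∃ N : ℝ, 0 < N ∧ ∀ u, u₀ ≤ u → 1 / N ≤ ‖h u‖ ∧ ‖h u‖ ≤ N) ∧
    ∃ hlim : EuclideanSpace ℂ (Fin 2), hlim ≠ 0 ∧
      Filter.Tendsto h Filter.atTop (nhds hlim) ∧
      ∃ b : ℝ, 0 < b ∧ ∀ u, u₀ ≤ u → ‖h u - hlim‖ ≤ b * Real.exp (-α * u) := by
  obtain ⟨M, hM⟩ := exists_abs_log_norm_le hq hα hderiv hne hbound
  have hN : ∀ u, u₀ ≤ u → 1 / Real.exp M ≤ ‖h u‖ ∧ ‖h u‖ ≤ Real.exp M := by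
    intro u hu
    have hp : 0 < ‖h u‖ := norm_pos_iff.2 (hne u hu)
    obtain ⟨h1, h2⟩ := abs_le.1 (hM u hu)
    rw [one_div, ← Real.exp_neg]
    exact ⟨(Real.le_log_iff_exp_le hp).1 h1, (Real.log_le_iff_le_exp hp).1 h2⟩
  refine ⟨⟨Real.exp M, Real.exp_pos M, hN⟩, ?_⟩
  have hdiff : ∀ u v, u₀ ≤ u → u ≤ v →
      ‖h v - h u‖ ≤ q * Real.exp M / α * Real.exp (-α * u) := by
    intro u v hu huv
    refine norm_sub_le_of_deriv_exp_decay (by positivity) hα hderiv (fun x hx => ?_) hu huv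
    refine (hbound x hx).trans ?_
    rw [mul_right_comm]
    gcongr
    exact (hN x hx).2
  have hexp : Filter.Tendsto (fun u : ℝ => q * Real.exp M / α * Real.exp (-α * u))
      Filter.atTop (nhds 0) := by
    have := (Real.tendsto_exp_atBot.comp
      (Filter.tendsto_id.const_mul_atTop_of_neg (neg_lt_zero.2 hα))).const_mul
        (q * Real.exp M / α)
    simpa using this
  -- Nothing is known about `h` to the left of `u₀`, so the Cauchy criterion is applied to
  -- `u ↦ h (max u u₀)`, which agrees with `h` near infinity.
  have hc : CauchySeq (fun u => h (max u u₀)) := by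
    refine cauchySeq_of_le_tendsto_0' _ (fun u v huv => ?_) hexp
    rw [dist_comm, dist_eq_norm]
    refine (hdiff _ _ (le_max_right _ _) (max_le_max_right u₀ huv)).trans ?_
    refine mul_le_mul_of_nonneg_left (Real.exp_le_exp.2 ?_) (by positivity)
    nlinarith [le_max_left u u₀]
  obtain ⟨l, hl⟩ := cauchySeq_tendsto_of_complete hc
  have hl' : Filter.Tendsto h Filter.atTop (nhds l) := by
    refine hl.congr' ?_
    filter_upwards [Filter.eventually_ge_atTop u₀] with u hu
    rw [max_eq_left hu]
  refine ⟨l, ?_, hl', q * Real.exp M / α, by positivity, fun u hu => ?_⟩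
  · have h1 : 1 / Real.exp M ≤ ‖l‖ := ge_of_tendsto hl'.norm <| by
      filter_upwards [Filter.eventually_ge_atTop u₀] with u hu using (hN u hu).1
    exact norm_pos_iff.1 (lt_of_lt_of_le (by positivity) h1)
  · rw [norm_sub_rev]
    refine le_of_tendsto (hl'.sub_const (h u)).norm ?_
    filter_upwards [Filter.eventually_ge_atTop u] with v hv using hdiff u v hu hv
end

section
/- (Asymptotics at the Cauchy horizon.) Set Ω₋ = a/(r_-² + a²). Then for every solution X : ℝ → ℂ² of the ODE X'(u) = U₂(ρ₂(u))·X(u) that is not identically zero, there exist h = (h₁, h₂) ∈ ℂ² \ {0} and constants A, b > 0 such that for all sufficiently large u, ‖X(u) − (h₁·exp(2i(ω + k·Ω₋)·u), h₂)ᵀ‖ ≤ A·exp(−b·u). -/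
/-!
The coefficient matrix is anti-Hermitian, so `‖X‖` is constant. At the Cauchy horizon the explicit
formula for the tortoise coordinate gives `r - r₋ ≤ K exp (-u / c)` with
`c = (r₋² + a²) / (r₊ - r₋)` (`sqrt_sub_le_exp`), and every entry of
`U₂ - diag (2 i (ω + k Ω₋), 0)` is `√(r - r₋)` times a function continuous on `[r₋, r₊]`. Hence the
matrix converges exponentially to `diag (2 i (ω + k Ω₋), 0)`.

After the oscillation `exp (2 i (ω + k Ω₋) u)` is removed from the first component, both components
have exponentially small derivatives, because the solution is bounded; they therefore converge
exponentially (`exists_limit_of_deriv_le_exp`). Conservation of the norm also shows that the limit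
`(h₁, h₂)` has the norm of the nonzero solution, so it is not zero (`asymptotics_of_antiHermitian`).
-/

open Filter Topology ComplexConjugate

/-- A function whose derivative is `O(exp (-b u))` converges at infinity at the same rate. -/
lemma exists_limit_of_deriv_le_exp {f f' : ℝ → ℂ} {C b : ℝ} (hb : 0 < b)
    (hf : ∀ u, HasDerivAt f (f' u) u) (hbound : ∀ u, ‖f' u‖ ≤ C * Real.exp (-b * u)) :
    ∃ h : ℂ, Tendsto f atTop (𝓝 h) ∧ ∀ u, ‖f u - h‖ ≤ C / b * Real.exp (-b * u) := by
  have hC : 0 ≤ C := by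
    have := (norm_nonneg _).trans (hbound 0)
    simpa using this
  have key : ∀ u v, u ≤ v → ‖f v - f u‖ ≤ C / b * Real.exp (-b * u) := by
    intro u v huv
    have hB : ∀ t, HasDerivAt (fun t => C / b * (Real.exp (-b * u) - Real.exp (-b * t)))
        (C * Real.exp (-b * t)) t := by
      intro t
      have h := (((((hasDerivAt_id t).const_mul (-b)).exp).const_sub
        (Real.exp (-b * u))).const_mul (C / b))
      refine h.congr_deriv ?_
      simp only [id]
      field_simp
    have h := image_norm_le_of_norm_deriv_right_le_deriv_boundary
      (f := fun t => f t - f u) (f' := f') (a := u) (b := v)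
      (B := fun t => C / b * (Real.exp (-b * u) - Real.exp (-b * t)))
      (B' := fun t => C * Real.exp (-b * t))
      (fun t _ => ((hf t).sub_const _).continuousAt.continuousWithinAt)
      (fun t _ => ((hf t).sub_const _).hasDerivWithinAt)
      (by simp) hB (fun t _ => hbound t) (Set.right_mem_Icc.2 huv)
    refine h.trans ?_
    have h0 := Real.exp_pos (-b * v)
    have : 0 ≤ C / b := by positivity
    exact mul_le_mul_of_nonneg_left (by linarith) this
  have hlim : Tendsto (fun u => C / b * Real.exp (-b * u)) atTop (𝓝 0) := by
    have h : Tendsto (fun u : ℝ => -b * u) atTop atBot :=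
      tendsto_id.const_mul_atTop_of_neg (by linarith)
    simpa using (Real.tendsto_exp_atBot.comp h).const_mul (C / b)
  have hcau : CauchySeq f := cauchySeq_of_le_tendsto_0' _
    (fun u v huv => by rw [dist_comm, dist_eq_norm]; exact key u v huv) hlim
  obtain ⟨h, hh⟩ := cauchySeq_tendsto_of_complete hcau
  refine ⟨h, hh, fun u => ?_⟩
  have h1 : Tendsto (fun v => ‖f v - f u‖) atTop (𝓝 ‖h - f u‖) := (hh.sub_const _).norm
  rw [norm_sub_rev]
  exact le_of_tendsto h1 ((eventually_ge_atTop u).mono fun v hv => key u v hv)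

/-- A nonzero solution of a `2 × 2` anti-Hermitian linear system whose matrix converges
exponentially to `diag (i l, 0)` is exponentially close to a nonzero solution of the limiting
system. -/
lemma asymptotics_of_antiHermitian {x y q : ℝ → ℂ} {α β : ℝ → ℝ} {l C b : ℝ} (hb : 0 < b)
    (hx : ∀ u, HasDerivAt x (Complex.I * α u * x u + q u * y u) u)
    (hy : ∀ u, HasDerivAt y (-conj (q u) * x u + Complex.I * β u * y u) u)
    (hα : ∀ u, |α u - l| ≤ C * Real.exp (-b * u)) (hβ : ∀ u, |β u| ≤ C * Real.exp (-b * u))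
    (hq : ∀ u, ‖q u‖ ≤ C * Real.exp (-b * u)) (h0 : ∃ u, x u ≠ 0 ∨ y u ≠ 0) :
    ∃ h₁ h₂ : ℂ, (h₁, h₂) ≠ (0, 0) ∧ ∃ A : ℝ, 0 < A ∧ ∀ u,
      ‖x u - h₁ * Complex.exp (Complex.I * ((l * u : ℝ) : ℂ))‖ ≤ A * Real.exp (-b * u) ∧
      ‖y u - h₂‖ ≤ A * Real.exp (-b * u) := by
  have hC : 0 ≤ C := by
    have := (norm_nonneg _).trans (hq 0)
    simpa using this
  have hconst : ∀ u v, ‖x u‖ ^ 2 + ‖y u‖ ^ 2 = ‖x v‖ ^ 2 + ‖y v‖ ^ 2 := by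
    have hd : ∀ u, HasDerivAt (fun u => x u * conj (x u) + y u * conj (y u)) 0 u := by
      intro u
      have hcx : HasDerivAt (fun u => conj (x u)) _ u := (hx u).star
      have hcy : HasDerivAt (fun u => conj (y u)) _ u := (hy u).star
      refine (((hx u).mul hcx).add ((hy u).mul hcy)).congr_deriv ?_
      simp only [Complex.star_def, map_add, map_mul, map_neg, Complex.conj_I, Complex.conj_ofReal,
        Complex.conj_conj]
      ring
    intro u v
    have h := is_const_of_deriv_eq_zero (fun u => (hd u).differentiableAt)
      (fun u => (hd u).deriv) u v
    simp only [Complex.mul_conj'] at h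
    exact_mod_cast h
  obtain ⟨u₀, hu₀⟩ := h0
  set N := ‖x u₀‖ ^ 2 + ‖y u₀‖ ^ 2 with hN
  have hNpos : 0 < N := by
    rcases hu₀ with h | h
    · have := norm_pos_iff.2 h
      positivity
    · have := norm_pos_iff.2 h
      positivity
  have hxN : ∀ u, ‖x u‖ ≤ √N := fun u => Real.le_sqrt_of_sq_le (by
    have := hconst u u₀; have := sq_nonneg ‖y u‖; linarith)
  have hyN : ∀ u, ‖y u‖ ≤ √N := fun u => Real.le_sqrt_of_sq_le (by
    have := hconst u u₀; have := sq_nonneg ‖x u‖; linarith)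
  set e : ℝ → ℂ := fun u => Complex.exp (Complex.I * ((l * u : ℝ) : ℂ)) with he
  set e' : ℝ → ℂ := fun u => Complex.exp (-(Complex.I * ((l * u : ℝ) : ℂ))) with he'
  have hee : ∀ u, e u * e' u = 1 := fun u => by
    rw [he, he', ← Complex.exp_add]; simp
  have hne : ∀ u, ‖e u‖ = 1 := fun u => by
    simp only [he]
    rw [mul_comm]; exact Complex.norm_exp_ofReal_mul_I _
  have hne' : ∀ u, ‖e' u‖ = 1 := fun u => by
    have := congrArg norm (hee u)
    simpa [hne] using this
  have hde' : ∀ u, HasDerivAt e' (-(Complex.I * l) * e' u) u := by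
    intro u
    have h1 : HasDerivAt (fun u : ℝ => ((l * u : ℝ) : ℂ)) ((l : ℝ) : ℂ) u := by
      simpa using ((hasDerivAt_id u).const_mul l).ofReal_comp
    have h2 : HasDerivAt e' (e' u * -(Complex.I * l)) u := ((h1.const_mul Complex.I).neg).cexp
    exact h2.congr_deriv (mul_comm _ _)
  have hbnd : ∀ u (c d z w : ℂ), ‖c‖ ≤ C * Real.exp (-b * u) → ‖d‖ ≤ C * Real.exp (-b * u) →
      ‖z‖ ≤ √N → ‖w‖ ≤ √N → ‖c * z + d * w‖ ≤ 2 * C * √N * Real.exp (-b * u) := by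
    intro u c d z w hc hd hz hw
    calc ‖c * z + d * w‖ ≤ ‖c‖ * ‖z‖ + ‖d‖ * ‖w‖ := by
          simpa using norm_add_le (c * z) (d * w)
      _ ≤ C * Real.exp (-b * u) * √N + C * Real.exp (-b * u) * √N := by gcongr
      _ = _ := by ring
  obtain ⟨h₁, hl₁, hh₁⟩ := exists_limit_of_deriv_le_exp (f := fun u => e' u * x u)
    (f' := fun u => e' u * (Complex.I * ((α u - l : ℝ) : ℂ) * x u + q u * y u))
    (C := 2 * C * √N) hb
    (fun u => ((hde' u).mul (hx u)).congr_deriv (by push_cast; ring))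
    (fun u => by
      rw [norm_mul, hne', one_mul]
      refine hbnd u _ _ _ _ ?_ (hq u) (hxN u) (hyN u)
      simpa [-Complex.ofReal_sub] using hα u)
  obtain ⟨h₂, hl₂, hh₂⟩ := exists_limit_of_deriv_le_exp (C := 2 * C * √N) hb hy
    (fun u => by
      refine hbnd u _ _ _ _ ?_ ?_ (hxN u) (hyN u)
      · simpa using hq u
      · simpa using hβ u)
  have hlimN : ‖h₁‖ ^ 2 + ‖h₂‖ ^ 2 = N := by
    have ht := (hl₁.norm.pow 2).add (hl₂.norm.pow 2)
    refine tendsto_nhds_unique ht ?_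
    refine tendsto_const_nhds.congr fun u => ?_
    rw [norm_mul, hne', one_mul, hconst u u₀]
  refine ⟨h₁, h₂, ?_, 2 * C * √N / b + 1, by positivity, fun u => ⟨?_, ?_⟩⟩
  · intro h
    simp only [Prod.mk.injEq] at h
    rw [h.1, h.2] at hlimN
    simp at hlimN
    linarith
  · have h1 : x u - h₁ * e u = e u * (e' u * x u - h₁) := by
      linear_combination (-x u) * hee u
    change ‖x u - h₁ * e u‖ ≤ _
    rw [h1, norm_mul, hne, one_mul]
    refine (hh₁ u).trans ?_
    gcongr
    linarith
  · refine (hh₂ u).trans ?_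
    gcongr
    linarith

/-- Solving the tortoise relation for `log (r - rm)` shows that `√(r - rm)` decays exponentially
in `u`; the remaining terms are bounded above since `r < rp`. -/
lemma sqrt_sub_le_exp {rm rp cp cm r u : ℝ} (hcp : 0 ≤ cp) (hcm : 0 < cm)
    (hr : r ∈ Set.Ioo rm rp)
    (hu : r + cp * Real.log |r - rp| - cm * Real.log |r - rm| = u) :
    √(r - rm) ≤ Real.exp ((rp + cp * Real.log (rp - rm)) / (2 * cm)) *
      Real.exp (-(1 / (2 * cm)) * u) := by
  obtain ⟨h1, h2⟩ := hr
  rw [abs_sub_comm, abs_of_pos (sub_pos.2 h2), abs_of_pos (sub_pos.2 h1)] at hu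
  have hlog : Real.log (rp - r) ≤ Real.log (rp - rm) :=
    Real.log_le_log (by linarith) (by linarith)
  have h3 := mul_le_mul_of_nonneg_left hlog hcp
  have h4 : Real.log (r - rm) ≤ (rp + cp * Real.log (rp - rm) - u) / cm := by
    rw [le_div_iff₀ hcm]
    linarith
  rw [← Real.exp_add]
  have h5 : r - rm ≤ Real.exp ((rp + cp * Real.log (rp - rm) - u) / cm) := by
    rw [← Real.exp_log (sub_pos.2 h1)]
    exact Real.exp_le_exp.2 h4
  refine (Real.sqrt_le_sqrt h5).trans (le_of_eq ?_)
  rw [← Real.exp_half]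
  congr 1
  field_simp
  ring


/-- Asymptotics of solutions of the radial Dirac ODE at the Cauchy horizon. -/
theorem radial_asymptotics_at_cauchy_horizon
    (M a Q ω ξ k m : ℝ) (h1 : 0 < a ^ 2 + Q ^ 2) (h2 : a ^ 2 + Q ^ 2 < M ^ 2)
    (hk : ∃ n : ℤ, k = (n : ℝ) + 1 / 2) (hm : 0 < m)
    (rp rm : ℝ)
    (hrp : rp = M + Real.sqrt (M ^ 2 - a ^ 2 - Q ^ 2))
    (hrm : rm = M - Real.sqrt (M ^ 2 - a ^ 2 - Q ^ 2))
    (rstar : ℝ → ℝ)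
    (hrstar : ∀ r : ℝ, rstar r =
      r + (rp ^ 2 + a ^ 2) / (rp - rm) * Real.log |r - rp|
        - (rm ^ 2 + a ^ 2) / (rp - rm) * Real.log |r - rm|)
    (ρ₂ : ℝ → ℝ) (hρ₂mem : ∀ u, ρ₂ u ∈ Set.Ioo rm rp)
    (hρ₂ : ∀ u, rstar (ρ₂ u) = u)
    (hρ₂inv : ∀ r ∈ Set.Ioo rm rp, ρ₂ (rstar r) = r)
    (Δ : ℝ → ℝ) (hΔ : ∀ r, Δ r = r ^ 2 - 2 * M * r + a ^ 2 + Q ^ 2)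
    (U₂ : ℝ → Matrix (Fin 2) (Fin 2) ℂ)
    (hU₂ : ∀ r ∈ Set.Ioo rm rp, U₂ r =
      ((r ^ 2 + a ^ 2 : ℝ) : ℂ)⁻¹ •
        !![Complex.I * ((ω * (2 * r ^ 2 + 2 * a ^ 2 - Δ r) + 2 * k * a : ℝ) : ℂ),
           ((Real.sqrt |Δ r| : ℝ) : ℂ) * (-(Complex.I * m * r) + (ξ : ℂ));
           -(((Real.sqrt |Δ r| : ℝ) : ℂ) * (Complex.I * m * r + (ξ : ℂ))),
           -(Complex.I * ((ω * Δ r : ℝ) : ℂ))])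
    (Ω : ℝ) (hΩ : Ω = a / (rm ^ 2 + a ^ 2))
    (X : ℝ → EuclideanSpace ℂ (Fin 2))
    (hX : ∀ u : ℝ, HasDerivAt X
      ((WithLp.equiv 2 (Fin 2 → ℂ)).symm
        ((U₂ (ρ₂ u)).mulVec ((WithLp.equiv 2 (Fin 2 → ℂ)) (X u)))) u)
    (hX0 : ∃ u, X u ≠ 0) :
    ∃ h₁ h₂ : ℂ, (h₁, h₂) ≠ (0, 0) ∧
      ∃ A b : ℝ, 0 < A ∧ 0 < b ∧ ∃ u₁ : ℝ, ∀ u, u₁ ≤ u →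
        ‖X u - (WithLp.equiv 2 (Fin 2 → ℂ)).symm
            ![h₁ * Complex.exp (2 * Complex.I * (((ω + k * Ω) * u : ℝ) : ℂ)), h₂]‖
          ≤ A * Real.exp (-b * u) := by
  have hs : 0 < √(M ^ 2 - a ^ 2 - Q ^ 2) := Real.sqrt_pos.2 (by linarith)
  have hss := Real.sq_sqrt (show 0 ≤ M ^ 2 - a ^ 2 - Q ^ 2 by linarith)
  have hlt : rm < rp := by rw [hrm, hrp]; linarith
  have hprod : rm * rp = a ^ 2 + Q ^ 2 := by
    rw [hrm, hrp]; linear_combination -hss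
  have hsum : rm + rp = 2 * M := by rw [hrm, hrp]; ring
  have hΔf : ∀ r, Δ r = -((r - rm) * (rp - r)) := fun r => by
    rw [hΔ]; linear_combination -hprod + r * hsum
  clear hrp hrm hs hss
  -- The roots have the same sign, so `r` does not vanish between them.
  have hden : ∀ r ∈ Set.Icc rm rp, 0 < r ^ 2 + a ^ 2 := by
    intro r hr
    have hr0 : r ≠ 0 := by
      rintro rfl
      have := mul_nonpos_of_nonpos_of_nonneg hr.1 hr.2
      linarith
    positivity
  have hrm0 : 0 < rm ^ 2 + a ^ 2 := hden rm ⟨le_rfl, hlt.le⟩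
  set cm := (rm ^ 2 + a ^ 2) / (rp - rm) with hcm
  set cp := (rp ^ 2 + a ^ 2) / (rp - rm) with hcp
  have hD : 0 < rp - rm := sub_pos.2 hlt
  have hcm0 : 0 < cm := div_pos hrm0 hD
  have hcp0 : 0 ≤ cp := by positivity
  have hsqrt : ∀ u, √(ρ₂ u - rm) ≤ Real.exp ((rp + cp * Real.log (rp - rm)) / (2 * cm)) *
      Real.exp (-(1 / (2 * cm)) * u) := fun u =>
    sqrt_sub_le_exp hcp0 hcm0 (hρ₂mem u) (by rw [← hrstar, hρ₂])
  set K := Real.exp ((rp + cp * Real.log (rp - rm)) / (2 * cm)) with hK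
  set b := 1 / (2 * cm) with hb
  have hb0 : 0 < b := by positivity
  have hne : ∀ r ∈ Set.Icc rm rp, r ^ 2 + a ^ 2 ≠ 0 := fun r hr => ne_of_gt (hden r hr)
  -- The two diagonal entries and the upper right entry of `U₂ - diag (2 i (ω + k Ω), 0)`, divided
  -- by `√(r - rm)` and, on the diagonal, by `i`.
  have hcont1 : ContinuousOn (fun r : ℝ => √(r - rm) * (ω * (rp - r) / (r ^ 2 + a ^ 2)
      - 2 * k * a * (r + rm) / ((r ^ 2 + a ^ 2) * (rm ^ 2 + a ^ 2)))) (Set.Icc rm rp) := by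
    refine ContinuousOn.mul (by fun_prop) (ContinuousOn.sub ?_ ?_)
    · exact ContinuousOn.div (by fun_prop) (by fun_prop) hne
    · exact ContinuousOn.div (by fun_prop) (by fun_prop)
        (fun r hr => mul_ne_zero (hne r hr) hrm0.ne')
  have hcont2 : ContinuousOn (fun r : ℝ => √(r - rm) * (ω * (rp - r) / (r ^ 2 + a ^ 2)))
      (Set.Icc rm rp) := by
    refine ContinuousOn.mul (by fun_prop) ?_
    exact ContinuousOn.div (by fun_prop) (by fun_prop) hne
  have hcont3 : ContinuousOn (fun r : ℝ => ((r ^ 2 + a ^ 2 : ℝ) : ℂ)⁻¹ *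
      (((√(rp - r) : ℝ) : ℂ) * (-(Complex.I * m * r) + (ξ : ℂ)))) (Set.Icc rm rp) := by
    refine ContinuousOn.mul (ContinuousOn.inv₀ (by fun_prop) ?_) (by fun_prop)
    exact fun r hr => Complex.ofReal_ne_zero.2 (hne r hr)
  obtain ⟨C₁, hC₁⟩ := isCompact_Icc.exists_bound_of_continuousOn hcont1
  obtain ⟨C₂, hC₂⟩ := isCompact_Icc.exists_bound_of_continuousOn hcont2
  obtain ⟨C₃, hC₃⟩ := isCompact_Icc.exists_bound_of_continuousOn hcont3
  set C := max C₁ (max C₂ C₃) with hC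
  have hest : ∀ u s : ℝ, s ≤ C → √(ρ₂ u - rm) * s ≤ C * K * Real.exp (-b * u) := by
    intro u s hsC
    have hC0 : 0 ≤ C := ((norm_nonneg _).trans (hC₁ rm ⟨le_rfl, hlt.le⟩)).trans (le_max_left _ _)
    calc √(ρ₂ u - rm) * s ≤ √(ρ₂ u - rm) * C :=
          mul_le_mul_of_nonneg_left hsC (Real.sqrt_nonneg _)
      _ ≤ (K * Real.exp (-b * u)) * C := mul_le_mul_of_nonneg_right (hsqrt u) hC0
      _ = _ := by ring
  have hIcc : ∀ u, ρ₂ u ∈ Set.Icc rm rp := fun u => Set.Ioo_subset_Icc_self (hρ₂mem u)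
  have hsq : ∀ u, √(ρ₂ u - rm) * √(ρ₂ u - rm) = ρ₂ u - rm := fun u =>
    Real.mul_self_sqrt (sub_nonneg.2 (hIcc u).1)
  have habs : ∀ u, √|Δ (ρ₂ u)| = √(ρ₂ u - rm) * √(rp - ρ₂ u) := fun u => by
    have ha := sub_nonneg.2 (hIcc u).1
    have hb := sub_nonneg.2 (hIcc u).2
    rw [hΔf, abs_neg, abs_of_nonneg (mul_nonneg ha hb), Real.sqrt_mul ha]
  have hcomp : ∀ (i : Fin 2) u, HasDerivAt (fun u => X u i)
      (((U₂ (ρ₂ u)).mulVec ((WithLp.equiv 2 (Fin 2 → ℂ)) (X u))) i) u := by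
    intro i u
    exact ((EuclideanSpace.proj (𝕜 := ℂ) i).restrictScalars ℝ).hasFDerivAt.comp_hasDerivAt u (hX u)
  obtain ⟨h₁, h₂, hh, A, hA, hbd⟩ := asymptotics_of_antiHermitian
    (x := fun u => X u 0) (y := fun u => X u 1)
    (q := fun u => (((ρ₂ u) ^ 2 + a ^ 2 : ℝ) : ℂ)⁻¹ *
      (((√|Δ (ρ₂ u)| : ℝ) : ℂ) * (-(Complex.I * m * (ρ₂ u)) + (ξ : ℂ))))
    (α := fun u => (ω * (2 * (ρ₂ u) ^ 2 + 2 * a ^ 2 - Δ (ρ₂ u)) + 2 * k * a) /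
      ((ρ₂ u) ^ 2 + a ^ 2))
    (β := fun u => -(ω * Δ (ρ₂ u)) / ((ρ₂ u) ^ 2 + a ^ 2))
    (l := 2 * (ω + k * Ω)) (C := C * K) (b := b) hb0
    (fun u => by
      refine (hcomp 0 u).congr_deriv ?_
      rw [hU₂ _ (hρ₂mem u)]
      simp [Matrix.mulVec, dotProduct, Fin.sum_univ_two, -mul_eq_mul_left_iff,
        -mul_eq_mul_right_iff]
      ring)
    (fun u => by
      refine (hcomp 1 u).congr_deriv ?_
      rw [hU₂ _ (hρ₂mem u)]
      simp [Matrix.mulVec, dotProduct, Fin.sum_univ_two, -mul_eq_mul_left_iff,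
        -mul_eq_mul_right_iff]
      ring)
    (fun u => by
      have h := hest u _ ((hC₁ _ (hIcc u)).trans (le_max_left _ _))
      rw [Real.norm_eq_abs, ← abs_of_nonneg (Real.sqrt_nonneg (ρ₂ u - rm)), ← abs_mul,
        abs_of_nonneg (Real.sqrt_nonneg (ρ₂ u - rm)), ← mul_assoc, hsq] at h
      refine (le_of_eq ?_).trans h
      congr 1
      have := hne _ (hIcc u)
      have := hrm0.ne'
      rw [hΩ, hΔf]
      field_simp
      ring)
    (fun u => by
      have h := hest u _ ((hC₂ _ (hIcc u)).trans ((le_max_left _ _).trans (le_max_right _ _)))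
      rw [Real.norm_eq_abs, ← abs_of_nonneg (Real.sqrt_nonneg (ρ₂ u - rm)), ← abs_mul,
        abs_of_nonneg (Real.sqrt_nonneg (ρ₂ u - rm)), ← mul_assoc, hsq] at h
      refine (le_of_eq ?_).trans h
      congr 1
      rw [hΔf]
      ring)
    (fun u => by
      have h := hest u _ ((hC₃ _ (hIcc u)).trans ((le_max_right _ _).trans (le_max_right _ _)))
      refine (le_of_eq ?_).trans h
      rw [← Complex.norm_of_nonneg (Real.sqrt_nonneg (ρ₂ u - rm)), ← norm_mul, habs]
      congr 1
      push_cast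
      ring)
    (by
      obtain ⟨u, hu⟩ := hX0
      refine ⟨u, ?_⟩
      by_contra! h
      apply hu
      ext i
      fin_cases i
      · exact h.1
      · exact h.2)
  refine ⟨h₁, h₂, hh, 2 * A, b, by positivity, hb0, 0, fun u _ => ?_⟩
  have hnorm : ∀ v : EuclideanSpace ℂ (Fin 2), ‖v‖ ≤ ‖v 0‖ + ‖v 1‖ := by
    intro v
    rw [EuclideanSpace.norm_eq, Fin.sum_univ_two]
    refine Real.sqrt_le_iff.2 ⟨by positivity, ?_⟩
    nlinarith [mul_nonneg (norm_nonneg (v 0)) (norm_nonneg (v 1))]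
  refine (hnorm _).trans ?_
  obtain ⟨hb1, hb2⟩ := hbd u
  have hexp : Complex.I * ((2 * (ω + k * Ω) * u : ℝ) : ℂ) =
      2 * Complex.I * (((ω + k * Ω) * u : ℝ) : ℂ) := by
    push_cast; ring
  rw [hexp] at hb1
  have hb3 := add_le_add hb1 hb2
  refine le_trans (le_of_eq ?_) (hb3.trans (le_of_eq (by ring)))
  simp
end

section
/- (Separation of the Dirac equation.) Suppose X̃₁, X̃₂ : (r_+, ∞) → ℂ are differentiable and satisfy the radial system (1/√(Δ(r)))·D₁X̃₁(r) + (i m r − ξ)·X̃₂(r) = 0 and −(i m r + ξ)·X̃₁(r) + √(Δ(r))·D₀X̃₂(r) = 0, where D₁ = −(1/r_+)·[(2r² + 2a² − Δ(r))·iω − Δ(r)·d/dr + 2aki] and D₀ = r_+·(iω + d/dr); and suppose Y₁, Y₂ : (0, π) → ℂ are differentiable and satisfy the angular system L₊Y₁(θ) + (−a m cos θ + ξ)·Y₂(θ) = 0 and (a m cos θ + ξ)·Y₁(θ) − L₋Y₂(θ) = 0, where L_± = d/dθ + cot(θ)/2 ∓ (aω sin θ + k/sin θ). Define Ψ : ℝ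 × (r_+, ∞) × (0, π) × ℝ → ℂ⁴ by Ψ(τ, r, θ, φ) = exp(−iωτ − ikφ)·(X̃₂(r)Y₂(θ), X̃₁(r)Y₁(θ), X̃₁(r)Y₂(θ), X̃₂(r)Y₁(θ))ᵀ. Then Ψ solves the transformed Dirac system: writing δ = r + i a cos θ, δ̄ = r − i a cos θ, D̃₁ = (1/r_+)·[(2r² + 2a² − Δ)·∂_τ + Δ·∂_r + 2a·∂_φ], D̃₀ = −r_+·(∂_τ − ∂_r), and L̃_± = ∂_θ + cot(θ)/2 ∓ i·(a sin θ·∂_τ + (1/sin θ)·∂_φ), the four equations iδm·Ψ₁ + (1/√Δ)·D̃₁Ψ₃ + L̃₊Ψ₄ = 0, −iδm·Ψ₂ − L̃₋Ψ₃ + √Δ·D̃₀Ψ₄ = 0, √Δ·D̃₀Ψ₁ + L̃₊Ψ₂ − iδ̄m·Ψ₃ = 0, and −L̃₋Ψ₁ + (1/√Δ)·D̃₁Ψ₂ + iδ̄m·Ψ₄ = 0 hold at every point of ℝ × (r_+, ∞) × (0, π) × ℝ. -/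
/-!
On a product `exp (-iωτ - ikφ) · X r · Y θ` the operator `∂_τ` acts as multiplication by `-iω` and
`∂_φ` as multiplication by `-ik`, so `D̃₁`, `D̃₀` act on the radial factor only, as the radial
operators `D₁`, `D₀`, and `L̃_±` act on the angular factor only, as `L_±`
(`D1op_mode`, `D0op_mode`, `Lplus_mode`, `Lminus_mode`). After this reduction each component of the
Dirac system is `exp (-iωτ - ikφ)` times a combination of one radial equation (times an angular
function) and one angular equation (times a radial function): the terms in `ξ` cancel, and
`i m r ∓ a m cos θ` recombine to `i m δ`, respectively `i m δ̄`.
-/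

noncomputable section

/-- Partial derivative in the Eddington–Finkelstein time `τ`. -/
def Dtau (Ψ : ℝ → ℝ → ℝ → ℝ → ℂ) (τ r θ φ : ℝ) : ℂ :=
  deriv (fun t => Ψ t r θ φ) τ

/-- Partial derivative in the radial coordinate `r`. -/
def Dr (Ψ : ℝ → ℝ → ℝ → ℝ → ℂ) (τ r θ φ : ℝ) : ℂ :=
  deriv (fun s => Ψ τ s θ φ) r

/-- Partial derivative in the polar angle `θ`. -/
def Dtheta (Ψ : ℝ → ℝ → ℝ → ℝ → ℂ) (τ r θ φ : ℝ) : ℂ :=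
  deriv (fun t => Ψ τ r t φ) θ

/-- Partial derivative in the azimuthal angle `φ`. -/
def Dphi (Ψ : ℝ → ℝ → ℝ → ℝ → ℂ) (τ r θ φ : ℝ) : ℂ :=
  deriv (fun p => Ψ τ r θ p) φ

/-- The operator `D̃₁ = (1/r₊)·[(2r² + 2a² − Δ)·∂_τ + Δ·∂_r + 2a·∂_φ]`. -/
def D1op (M a Q rp : ℝ) (Ψ : ℝ → ℝ → ℝ → ℝ → ℂ) (τ r θ φ : ℝ) : ℂ :=
  (1 / (rp : ℂ)) *
    (((2 * r ^ 2 + 2 * a ^ 2 - (r ^ 2 - 2 * M * r + a ^ 2 + Q ^ 2) : ℝ) : ℂ) *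
        Dtau Ψ τ r θ φ
      + ((r ^ 2 - 2 * M * r + a ^ 2 + Q ^ 2 : ℝ) : ℂ) * Dr Ψ τ r θ φ
      + 2 * (a : ℂ) * Dphi Ψ τ r θ φ)

/-- The operator `D̃₀ = −r₊·(∂_τ − ∂_r)`. -/
def D0op (rp : ℝ) (Ψ : ℝ → ℝ → ℝ → ℝ → ℂ) (τ r θ φ : ℝ) : ℂ :=
  -(rp : ℂ) * (Dtau Ψ τ r θ φ - Dr Ψ τ r θ φ)

/-- The operator `L̃₊ = ∂_θ + cot(θ)/2 − i·(a sin θ·∂_τ + (1/sin θ)·∂_φ)`. -/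
def Lplus (a : ℝ) (Ψ : ℝ → ℝ → ℝ → ℝ → ℂ) (τ r θ φ : ℝ) : ℂ :=
  Dtheta Ψ τ r θ φ + ((Real.cos θ / Real.sin θ : ℝ) : ℂ) / 2 * Ψ τ r θ φ
    - Complex.I * (((a * Real.sin θ : ℝ) : ℂ) * Dtau Ψ τ r θ φ
      + (1 / ((Real.sin θ : ℝ) : ℂ)) * Dphi Ψ τ r θ φ)

/-- The operator `L̃₋ = ∂_θ + cot(θ)/2 + i·(a sin θ·∂_τ + (1/sin θ)·∂_φ)`. -/
def Lminus (a : ℝ) (Ψ : ℝ → ℝ → ℝ → ℝ → ℂ) (τ r θ φ : ℝ) : ℂ :=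
  Dtheta Ψ τ r θ φ + ((Real.cos θ / Real.sin θ : ℝ) : ℂ) / 2 * Ψ τ r θ φ
    + Complex.I * (((a * Real.sin θ : ℝ) : ℂ) * Dtau Ψ τ r θ φ
      + (1 / ((Real.sin θ : ℝ) : ℂ)) * Dphi Ψ τ r θ φ)

/-- The product `exp (-iωτ - ikφ) · X r · Y θ`, the common form of the four spinor components. -/
def mode (ω k : ℝ) (X Y : ℝ → ℂ) (τ r θ φ : ℝ) : ℂ :=
  Complex.exp (-(Complex.I * (ω : ℂ) * (τ : ℂ)) - Complex.I * (k : ℂ) * (φ : ℂ)) * (X r * Y θ)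

lemma Dtau_mode (ω k : ℝ) (X Y : ℝ → ℂ) (τ r θ φ : ℝ) :
    Dtau (mode ω k X Y) τ r θ φ = -(Complex.I * ω) * mode ω k X Y τ r θ φ := by
  have h : HasDerivAt (fun t : ℝ => -(Complex.I * (ω : ℂ) * (t : ℂ))
      - Complex.I * (k : ℂ) * (φ : ℂ)) (-(Complex.I * (ω : ℂ) * 1)) τ :=
    (((HasDerivAt.ofReal_comp (hasDerivAt_id τ)).const_mul _).neg).sub_const _
  refine (h.cexp.mul_const (X r * Y θ)).deriv.trans ?_
  simp only [mode]
  ring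

lemma Dphi_mode (ω k : ℝ) (X Y : ℝ → ℂ) (τ r θ φ : ℝ) :
    Dphi (mode ω k X Y) τ r θ φ = -(Complex.I * k) * mode ω k X Y τ r θ φ := by
  have h : HasDerivAt (fun p : ℝ => -(Complex.I * (ω : ℂ) * (τ : ℂ))
      - Complex.I * (k : ℂ) * (p : ℂ)) (-(Complex.I * (k : ℂ) * 1)) φ :=
    ((HasDerivAt.ofReal_comp (hasDerivAt_id φ)).const_mul _).const_sub _
  refine (h.cexp.mul_const (X r * Y θ)).deriv.trans ?_
  simp only [mode]
  ring

lemma Dr_mode (ω k : ℝ) {X : ℝ → ℂ} (Y : ℝ → ℂ) {X' : ℂ} (τ : ℝ) {r : ℝ} (θ φ : ℝ)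
    (hX : HasDerivAt X X' r) :
    Dr (mode ω k X Y) τ r θ φ = mode ω k (fun _ => X') Y τ r θ φ :=
  ((hX.mul_const (Y θ)).const_mul _).deriv

lemma Dtheta_mode (ω k : ℝ) (X : ℝ → ℂ) {Y : ℝ → ℂ} {Y' : ℂ} (τ r : ℝ) {θ : ℝ} (φ : ℝ)
    (hY : HasDerivAt Y Y' θ) :
    Dtheta (mode ω k X Y) τ r θ φ = mode ω k X (fun _ => Y') τ r θ φ :=
  ((hY.const_mul (X r)).const_mul _).deriv

/-- `D̃₁` acts on a mode as the radial operator `D₁`. -/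
lemma D1op_mode (M a Q rp ω k : ℝ) {X : ℝ → ℂ} (Y : ℝ → ℂ) {X' : ℂ} (τ : ℝ) {r : ℝ} (θ φ : ℝ)
    (hX : HasDerivAt X X' r) :
    D1op M a Q rp (mode ω k X Y) τ r θ φ =
      Complex.exp (-(Complex.I * (ω : ℂ) * (τ : ℂ)) - Complex.I * (k : ℂ) * (φ : ℂ)) *
        ((-(1 / (rp : ℂ)) *
          (((2 * r ^ 2 + 2 * a ^ 2 - (r ^ 2 - 2 * M * r + a ^ 2 + Q ^ 2) : ℝ) : ℂ) *
              (Complex.I * (ω : ℂ)) * X r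
            - ((r ^ 2 - 2 * M * r + a ^ 2 + Q ^ 2 : ℝ) : ℂ) * X'
            + 2 * (a : ℂ) * (k : ℂ) * Complex.I * X r)) * Y θ) := by
  rw [D1op, Dtau_mode, Dphi_mode, Dr_mode ω k Y τ θ φ hX]
  simp only [mode]
  ring

/-- `D̃₀` acts on a mode as the radial operator `D₀`. -/
lemma D0op_mode (rp ω k : ℝ) {X : ℝ → ℂ} (Y : ℝ → ℂ) {X' : ℂ} (τ : ℝ) {r : ℝ} (θ φ : ℝ)
    (hX : HasDerivAt X X' r) :
    D0op rp (mode ω k X Y) τ r θ φ =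
      Complex.exp (-(Complex.I * (ω : ℂ) * (τ : ℂ)) - Complex.I * (k : ℂ) * (φ : ℂ)) *
        (((rp : ℂ) * (Complex.I * (ω : ℂ) * X r + X')) * Y θ) := by
  rw [D0op, Dtau_mode, Dr_mode ω k Y τ θ φ hX]
  simp only [mode]
  ring

/-- `L̃₊` acts on a mode as the angular operator `L₊`. -/
lemma Lplus_mode (a ω k : ℝ) (X : ℝ → ℂ) {Y : ℝ → ℂ} {Y' : ℂ} (τ r : ℝ) {θ : ℝ} (φ : ℝ)
    (hY : HasDerivAt Y Y' θ) :
    Lplus a (mode ω k X Y) τ r θ φ =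
      Complex.exp (-(Complex.I * (ω : ℂ) * (τ : ℂ)) - Complex.I * (k : ℂ) * (φ : ℂ)) *
        (X r * (Y' + ((Real.cos θ / Real.sin θ : ℝ) : ℂ) / 2 * Y θ
          - ((a * ω * Real.sin θ + k / Real.sin θ : ℝ) : ℂ) * Y θ)) := by
  rw [Lplus, Dtau_mode, Dphi_mode, Dtheta_mode ω k X τ r φ hY]
  simp only [mode]
  push_cast
  ring_nf
  simp only [Complex.I_sq]
  ring

/-- `L̃₋` acts on a mode as the angular operator `L₋`. -/
lemma Lminus_mode (a ω k : ℝ) (X : ℝ → ℂ) {Y : ℝ → ℂ} {Y' : ℂ} (τ r : ℝ) {θ : ℝ} (φ : ℝ)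
    (hY : HasDerivAt Y Y' θ) :
    Lminus a (mode ω k X Y) τ r θ φ =
      Complex.exp (-(Complex.I * (ω : ℂ) * (τ : ℂ)) - Complex.I * (k : ℂ) * (φ : ℂ)) *
        (X r * (Y' + ((Real.cos θ / Real.sin θ : ℝ) : ℂ) / 2 * Y θ
          + ((a * ω * Real.sin θ + k / Real.sin θ : ℝ) : ℂ) * Y θ)) := by
  rw [Lminus, Dtau_mode, Dphi_mode, Dtheta_mode ω k X τ r φ hY]
  simp only [mode]
  push_cast
  ring_nf
  simp only [Complex.I_sq]
  ring

/-- Separation of the Dirac equation in Kerr–Newman spacetime: solutions of the radial and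
angular systems combine to a solution of the transformed Dirac system. -/
theorem separation_of_dirac_equation
    (M a Q ω k m : ℝ) (ξ : ℂ)
    (h1 : 0 < a ^ 2 + Q ^ 2) (h2 : a ^ 2 + Q ^ 2 < M ^ 2)
    (hk : ∃ n : ℤ, k = (n : ℝ) + 1 / 2) (hm : 0 < m)
    (rp : ℝ) (hrp : rp = M + Real.sqrt (M ^ 2 - a ^ 2 - Q ^ 2))
    (Δ : ℝ → ℝ) (hΔ : ∀ r, Δ r = r ^ 2 - 2 * M * r + a ^ 2 + Q ^ 2)
    (X₁ X₂ X₁' X₂' : ℝ → ℂ)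
    (hX₁ : ∀ r ∈ Set.Ioi rp, HasDerivAt X₁ (X₁' r) r)
    (hX₂ : ∀ r ∈ Set.Ioi rp, HasDerivAt X₂ (X₂' r) r)
    (hrad1 : ∀ r ∈ Set.Ioi rp,
      (1 / ((Real.sqrt (Δ r) : ℝ) : ℂ)) *
          (-(1 / (rp : ℂ)) *
            (((2 * r ^ 2 + 2 * a ^ 2 - Δ r : ℝ) : ℂ) * (Complex.I * (ω : ℂ)) * X₁ r
              - ((Δ r : ℝ) : ℂ) * X₁' r
              + 2 * (a : ℂ) * (k : ℂ) * Complex.I * X₁ r))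
        + (Complex.I * (m : ℂ) * (r : ℂ) - ξ) * X₂ r = 0)
    (hrad2 : ∀ r ∈ Set.Ioi rp,
      -(Complex.I * (m : ℂ) * (r : ℂ) + ξ) * X₁ r
        + ((Real.sqrt (Δ r) : ℝ) : ℂ) *
            ((rp : ℂ) * (Complex.I * (ω : ℂ) * X₂ r + X₂' r)) = 0)
    (Y₁ Y₂ Y₁' Y₂' : ℝ → ℂ)
    (hY₁ : ∀ θ ∈ Set.Ioo 0 Real.pi, HasDerivAt Y₁ (Y₁' θ) θ)
    (hY₂ : ∀ θ ∈ Set.Ioo 0 Real.pi, HasDerivAt Y₂ (Y₂' θ) θ)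
    (hang1 : ∀ θ ∈ Set.Ioo 0 Real.pi,
      (Y₁' θ + ((Real.cos θ / Real.sin θ : ℝ) : ℂ) / 2 * Y₁ θ
          - ((a * ω * Real.sin θ + k / Real.sin θ : ℝ) : ℂ) * Y₁ θ)
        + ((-(a * m * Real.cos θ) : ℝ) + ξ) * Y₂ θ = 0)
    (hang2 : ∀ θ ∈ Set.Ioo 0 Real.pi,
      (((a * m * Real.cos θ : ℝ) : ℂ) + ξ) * Y₁ θ
        - (Y₂' θ + ((Real.cos θ / Real.sin θ : ℝ) : ℂ) / 2 * Y₂ θ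
            + ((a * ω * Real.sin θ + k / Real.sin θ : ℝ) : ℂ) * Y₂ θ) = 0)
    (Ψ₁ Ψ₂ Ψ₃ Ψ₄ : ℝ → ℝ → ℝ → ℝ → ℂ)
    (hΨ₁ : Ψ₁ = fun (τ r θ φ : ℝ) =>
      Complex.exp (-(Complex.I * (ω : ℂ) * (τ : ℂ)) - Complex.I * (k : ℂ) * (φ : ℂ)) *
        (X₂ r * Y₂ θ))
    (hΨ₂ : Ψ₂ = fun (τ r θ φ : ℝ) =>
      Complex.exp (-(Complex.I * (ω : ℂ) * (τ : ℂ)) - Complex.I * (k : ℂ) * (φ : ℂ)) *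
        (X₁ r * Y₁ θ))
    (hΨ₃ : Ψ₃ = fun (τ r θ φ : ℝ) =>
      Complex.exp (-(Complex.I * (ω : ℂ) * (τ : ℂ)) - Complex.I * (k : ℂ) * (φ : ℂ)) *
        (X₁ r * Y₂ θ))
    (hΨ₄ : Ψ₄ = fun (τ r θ φ : ℝ) =>
      Complex.exp (-(Complex.I * (ω : ℂ) * (τ : ℂ)) - Complex.I * (k : ℂ) * (φ : ℂ)) *
        (X₂ r * Y₁ θ)) :
    ∀ (τ φ : ℝ), ∀ r ∈ Set.Ioi rp, ∀ θ ∈ Set.Ioo 0 Real.pi,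
      (Complex.I * ((r : ℂ) + Complex.I * (a : ℂ) * ((Real.cos θ : ℝ) : ℂ)) * (m : ℂ) *
            Ψ₁ τ r θ φ
          + (1 / ((Real.sqrt (Δ r) : ℝ) : ℂ)) * D1op M a Q rp Ψ₃ τ r θ φ
          + Lplus a Ψ₄ τ r θ φ = 0) ∧
      (-(Complex.I * ((r : ℂ) + Complex.I * (a : ℂ) * ((Real.cos θ : ℝ) : ℂ)) * (m : ℂ) *
            Ψ₂ τ r θ φ)
          - Lminus a Ψ₃ τ r θ φ
          + ((Real.sqrt (Δ r) : ℝ) : ℂ) * D0op rp Ψ₄ τ r θ φ = 0) ∧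
      (((Real.sqrt (Δ r) : ℝ) : ℂ) * D0op rp Ψ₁ τ r θ φ
          + Lplus a Ψ₂ τ r θ φ
          - Complex.I * ((r : ℂ) - Complex.I * (a : ℂ) * ((Real.cos θ : ℝ) : ℂ)) * (m : ℂ) *
              Ψ₃ τ r θ φ = 0) ∧
      (-(Lminus a Ψ₁ τ r θ φ)
          + (1 / ((Real.sqrt (Δ r) : ℝ) : ℂ)) * D1op M a Q rp Ψ₂ τ r θ φ
          + Complex.I * ((r : ℂ) - Complex.I * (a : ℂ) * ((Real.cos θ : ℝ) : ℂ)) * (m : ℂ) *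
              Ψ₄ τ r θ φ = 0) := by
  intro τ φ r hr θ hθ
  replace hΨ₁ : Ψ₁ = mode ω k X₂ Y₂ := hΨ₁
  replace hΨ₂ : Ψ₂ = mode ω k X₁ Y₁ := hΨ₂
  replace hΨ₃ : Ψ₃ = mode ω k X₁ Y₂ := hΨ₃
  replace hΨ₄ : Ψ₄ = mode ω k X₂ Y₁ := hΨ₄
  subst hΨ₁ hΨ₂ hΨ₃ hΨ₄
  have R1 := hrad1 r hr
  have R2 := hrad2 r hr
  have A1 := hang1 θ hθ
  have A2 := hang2 θ hθ
  rw [D1op_mode M a Q rp ω k Y₂ τ θ φ (hX₁ r hr), D1op_mode M a Q rp ω k Y₁ τ θ φ (hX₁ r hr),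
    D0op_mode rp ω k Y₁ τ θ φ (hX₂ r hr), D0op_mode rp ω k Y₂ τ θ φ (hX₂ r hr),
    Lplus_mode a ω k X₂ τ r φ (hY₁ θ hθ), Lplus_mode a ω k X₁ τ r φ (hY₁ θ hθ),
    Lminus_mode a ω k X₁ τ r φ (hY₂ θ hθ), Lminus_mode a ω k X₂ τ r φ (hY₂ θ hθ), ← hΔ r]
  simp only [mode]
  -- Only the mass terms need the casts of `a m cos θ` split; the operators stay opaque.
  rw [Complex.ofReal_neg] at A1
  have hc : ((a * m * Real.cos θ : ℝ) : ℂ) = (a : ℂ) * m * ((Real.cos θ : ℝ) : ℂ) := by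
    push_cast
    ring
  rw [hc] at A1 A2
  have hI : Complex.I * Complex.I = -1 := Complex.I_mul_I
  generalize Complex.exp (-(Complex.I * (ω : ℂ) * (τ : ℂ)) - Complex.I * (k : ℂ) * (φ : ℂ)) = E
  generalize ((Real.cos θ : ℝ) : ℂ) = c at *
  refine ⟨?_, ?_, ?_, ?_⟩
  · linear_combination E * Y₂ θ * R1 + E * X₂ r * A1 + E * X₂ r * Y₂ θ * a * c * m * hI
  · linear_combination E * Y₁ θ * R2 + E * X₁ r * A2 - E * X₁ r * Y₁ θ * a * c * m * hI
  · linear_combination E * Y₂ θ * R2 + E * X₁ r * A1 + E * X₁ r * Y₂ θ * a * c * m * hI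
  · linear_combination E * Y₁ θ * R1 + E * X₂ r * A2 - E * X₂ r * Y₁ θ * a * c * m * hI

end
end
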